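/- No permutation of (F_2)^4 is differentially 2-uniform with respect to XOR; that is, for every bijection S : (F_2)^4 → (F_2)^4 there exist a nonzero a and some c with |{x : S(x + a) + S(x) = c}| ≥ 4. -/

import Mathlib

/-!
Compare two estimates of the fourth moment of the Walsh coefficients of an APN permutation `S` of a
space of order `N = 16`, summed over all components `ψ ∘ S`.

By orthogonality of characters this moment counts, up to the factor `N ^ 2`, the quadruples with
`x + y + z + w = 0` and `S x + S y + S z + S w = 0`. For an APN function two of the entries agree,
so there are at most `3 * N ^ 2` such quadruples.

Conversely, each component with `ψ ≠ 0` is balanced, so its Walsh coefficients are multiples of `4`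
and satisfy `8 ∣ W φ + W α + W (φ + α)`. If some `W α` is not a multiple of `8`, then for every `φ`
one of `W φ`, `W (φ + α)` is. At least half of the coefficients are thus multiples of `8`, and with
Parseval's identity this makes the fourth moment of the component too large.
-/

open Finset Module

/-- The nontrivial character `b ↦ (-1) ^ b` of `𝔽₂`, with integer values so that divisibility of
character sums makes sense. -/
def signChar : AddChar (ZMod 2) ℤ :=
  AddChar.zmodChar 2 (ζ := -1) (by norm_num)

lemma signChar_ne_one {b : ZMod 2} (hb : b ≠ 0) : signChar b ≠ 1 := by
  revert b; decide

lemma two_dvd_one_add_signChar (b : ZMod 2) : 2 ∣ 1 + signChar b := by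
  revert b; decide

lemma two_dvd_signChar_sub_one (b : ZMod 2) : 2 ∣ signChar b - 1 := by
  revert b; decide

lemma signChar_sum {ι : Type*} (s : Finset ι) (f : ι → ZMod 2) :
    signChar (∑ i ∈ s, f i) = ∏ i ∈ s, signChar (f i) :=
  map_prod signChar.toMonoidHom (fun i => Multiplicative.ofAdd (f i)) s

lemma add_eq_zero_iff_eq_of_zmod_two {G : Type*} [AddCommGroup G] [Module (ZMod 2) G] {x y : G} :
    x + y = 0 ↔ x = y := by
  rw [← ZModModule.sub_eq_add, sub_eq_zero]

variable {V W : Type*} [AddCommGroup V] [Module (ZMod 2) V] [AddCommGroup W] [Module (ZMod 2) W]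

noncomputable local instance [Fintype V] : Fintype (Dual (ZMod 2) V) :=
  @Fintype.ofFinite _ (DFunLike.finite _)

section Walsh

variable [Fintype V]

lemma sum_signChar_dual_eq_zero {φ : Dual (ZMod 2) V} (hφ : φ ≠ 0) :
    ∑ x, signChar (φ x) = 0 := by
  refine AddChar.sum_eq_zero_of_ne_one
    (ψ := signChar.compAddMonoidHom φ.toAddMonoidHom) fun h => hφ ?_
  ext x
  by_contra hx
  exact signChar_ne_one hx (DFunLike.congr_fun h x)

lemma card_dvd_sum_signChar_dual (φ : Dual (ZMod 2) V) :
    (Fintype.card V : ℤ) ∣ ∑ x, signChar (φ x) := by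
  rcases eq_or_ne φ 0 with rfl | hφ
  · simp
  · simp [sum_signChar_dual_eq_zero hφ]

variable (V) in
lemma card_dual_zmod_two : Fintype.card (Dual (ZMod 2) V) = Fintype.card V := by
  rw [card_eq_pow_finrank (K := ZMod 2) (V := V), card_eq_pow_finrank (K := ZMod 2),
    Subspace.dual_finrank_eq]

lemma sum_dual_signChar [DecidableEq V] (x : V) :
    ∑ φ : Dual (ZMod 2) V, signChar (φ x) = if x = 0 then (Fintype.card V : ℤ) else 0 := by
  split_ifs with hx
  · simp [hx, card_dual_zmod_two]
  · refine sum_signChar_dual_eq_zero (φ := Dual.eval (ZMod 2) V x) fun h => hx ?_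
    exact (forall_dual_apply_eq_zero_iff (ZMod 2) x).1 (DFunLike.congr_fun h)

/-- A Boolean function is balanced if it takes both values equally often, here expressed by the
vanishing of its signed sum. -/
def IsBalanced {α : Type*} [Fintype α] (f : α → ZMod 2) : Prop :=
  ∑ x, signChar (f x) = 0

lemma isBalanced_dual_comp {α : Type*} [Fintype α] {S : α → W} (hS : S.Bijective)
    {ψ : Dual (ZMod 2) W} (hψ : ψ ≠ 0) : IsBalanced (ψ ∘ S) :=
  have : Fintype W := .ofBijective S hS
  (hS.sum_comp fun y => signChar (ψ y)).trans (sum_signChar_dual_eq_zero hψ)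

/-- The Walsh transform of a Boolean function on an `𝔽₂`-vector space, with frequencies ranging
over the dual space instead of over coordinate vectors. -/
def walsh (f : V → ZMod 2) (φ : Dual (ZMod 2) V) : ℤ :=
  ∑ x, signChar (f x + φ x)

lemma sum_walsh_pow [DecidableEq V] (f : V → ZMod 2) (k : ℕ) :
    ∑ φ, walsh f φ ^ k =
      Fintype.card V * ∑ p : Fin k → V with ∑ i, p i = 0, signChar (∑ i, f (p i)) := by
  calc ∑ φ, walsh f φ ^ k
      = ∑ φ : Dual (ZMod 2) V, ∑ p : Fin k → V,
          signChar (∑ i, f (p i)) * signChar (φ (∑ i, p i)) := by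
        simp only [walsh, Fintype.sum_pow, signChar_sum, prod_mul_distrib,
          AddChar.map_add_eq_mul, map_sum]
    _ = ∑ p : Fin k → V, if ∑ i, p i = 0 then
          Fintype.card V * signChar (∑ i, f (p i)) else 0 := by
        rw [sum_comm]
        simp only [← mul_sum, sum_dual_signChar, mul_ite, mul_zero,
          mul_comm (signChar _) (Fintype.card V : ℤ)]
    _ = _ := by rw [← sum_filter, mul_sum]

lemma sum_walsh_sq (f : V → ZMod 2) : ∑ φ, walsh f φ ^ 2 = (Fintype.card V : ℤ) ^ 2 := by
  classical
  have diagonal : ∑ p : Fin 2 → V with ∑ i, p i = 0, signChar (∑ i, f (p i)) =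
      Fintype.card V := by
    simp only [Fin.sum_univ_two, add_eq_zero_iff_eq_of_zmod_two]
    rw [sum_filter, ← (finTwoArrowEquiv V).symm.sum_comp, Fintype.sum_prod_type]
    simp [CharTwo.add_self_eq_zero]
  rw [sum_walsh_pow, diagonal, sq]

lemma sum_sum_walsh_pow [Fintype W] [DecidableEq V] [DecidableEq W] (S : V → W) (k : ℕ) :
    ∑ ψ : Dual (ZMod 2) W, ∑ φ, walsh (ψ ∘ S) φ ^ k =
      Fintype.card V * Fintype.card W *
        #{p : Fin k → V | ∑ i, p i = 0 ∧ ∑ i, S (p i) = 0} := by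
  simp only [sum_walsh_pow, Function.comp_apply, ← map_sum]
  rw [← mul_sum, sum_comm, mul_assoc]
  simp only [sum_dual_signChar, ← sum_filter, filter_filter, sum_const, nsmul_eq_mul, mul_comm]

lemma IsBalanced.four_dvd_walsh {f : V → ZMod 2} (hf : IsBalanced f) (hV : 4 ∣ Fintype.card V)
    (φ : Dual (ZMod 2) V) : 4 ∣ walsh f φ := by
  have expand : walsh f φ =
      ∑ x, (1 + signChar (φ x)) * (signChar (f x) - 1) +
        (Fintype.card V + ∑ x, signChar (φ x)) - ∑ x, signChar (f x) := by
    rw [Fintype.card_eq_sum_ones]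
    push_cast
    simp only [walsh, ← sum_add_distrib, ← sum_sub_distrib]
    refine sum_congr rfl fun x _ => ?_
    rw [AddChar.map_add_eq_mul]
    ring
  have card_dvd : (4 : ℤ) ∣ Fintype.card V := mod_cast hV
  rw [expand, hf, sub_zero]
  refine dvd_add (dvd_sum fun x _ => ?_)
    (dvd_add card_dvd (card_dvd.trans (card_dvd_sum_signChar_dual φ)))
  exact mul_dvd_mul (two_dvd_one_add_signChar _) (two_dvd_signChar_sub_one _)

lemma IsBalanced.eight_dvd_walsh_add_walsh_add_walsh {f : V → ZMod 2} (hf : IsBalanced f)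
    (hV : 8 ∣ Fintype.card V) (φ ψ : Dual (ZMod 2) V) :
    8 ∣ walsh f φ + walsh f ψ + walsh f (φ + ψ) := by
  have expand : walsh f φ + walsh f ψ + walsh f (φ + ψ) =
      ∑ x, (1 + signChar (φ x)) * (1 + signChar (ψ x)) * (signChar (f x) - 1) +
        (Fintype.card V + ∑ x, signChar (φ x) + ∑ x, signChar (ψ x) +
          ∑ x, signChar ((φ + ψ) x)) - ∑ x, signChar (f x) := by
    rw [Fintype.card_eq_sum_ones]
    push_cast
    simp only [walsh, ← sum_add_distrib, ← sum_sub_distrib]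
    refine sum_congr rfl fun x _ => ?_
    simp only [LinearMap.add_apply, AddChar.map_add_eq_mul]
    ring
  have card_dvd : (8 : ℤ) ∣ Fintype.card V := mod_cast hV
  have dvd_sum_signChar (χ : Dual (ZMod 2) V) : 8 ∣ ∑ x, signChar (χ x) :=
    card_dvd.trans (card_dvd_sum_signChar_dual χ)
  rw [expand, hf, sub_zero]
  refine dvd_add (dvd_sum fun x _ => ?_) (dvd_add (dvd_add (dvd_add card_dvd
    (dvd_sum_signChar _)) (dvd_sum_signChar _)) (dvd_sum_signChar _))
  exact mul_dvd_mul (mul_dvd_mul (two_dvd_one_add_signChar _) (two_dvd_one_add_signChar _))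
    (two_dvd_signChar_sub_one _)

lemma sixtyFour_mul_sq_le_pow_four {m : ℤ} (hm : 8 ∣ m) : 64 * m ^ 2 ≤ m ^ 4 := by
  rcases eq_or_ne m 0 with rfl | hm0
  · simp
  · have : 8 ≤ |m| := Int.le_of_dvd (abs_pos.2 hm0) ((dvd_abs 8 m).2 hm)
    have : 64 ≤ m ^ 2 := by nlinarith [sq_abs m]
    nlinarith [sq_nonneg m]

lemma sixtyFour_mul_sq_sub_le_pow_four {m : ℤ} (hm : 4 ∣ m) : 64 * m ^ 2 - 768 ≤ m ^ 4 := by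
  -- no multiple of `4` lies strictly between the roots `4` and `√48 < 8`
  suffices 0 ≤ (m ^ 2 - 16) * (m ^ 2 - 48) by linarith
  rcases le_or_gt |m| 4 with h | h
  · have : m ^ 2 ≤ 16 := by nlinarith [sq_abs m, abs_nonneg m]
    nlinarith
  · have : 4 ∣ |m| := (dvd_abs 4 m).2 hm
    have : 8 ≤ |m| := by omega
    have : 64 ≤ m ^ 2 := by nlinarith [sq_abs m]
    nlinarith

lemma IsBalanced.le_sum_walsh_pow_four {f : V → ZMod 2} (hf : IsBalanced f)
    (hV : 8 ∣ Fintype.card V) :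
    64 * (Fintype.card V : ℤ) ^ 2 - 384 * Fintype.card V ≤ ∑ φ, walsh f φ ^ 4 := by
  have four_dvd := hf.four_dvd_walsh (dvd_trans (by norm_num) hV)
  by_cases h8 : ∀ φ, 8 ∣ walsh f φ
  · have := sum_le_sum fun φ (_ : φ ∈ univ) => sixtyFour_mul_sq_le_pow_four (h8 φ)
    rw [← mul_sum, sum_walsh_sq] at this
    linarith [Int.natCast_nonneg (Fintype.card V)]
  · push Not at h8
    obtain ⟨α, hα⟩ := h8
    have pair_le (φ) : 64 * (walsh f φ ^ 2 + walsh f (φ + α) ^ 2) - 768 ≤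
        walsh f φ ^ 4 + walsh f (φ + α) ^ 4 := by
      have eight_dvd : 8 ∣ walsh f φ ∨ 8 ∣ walsh f (φ + α) := by
        have := hf.eight_dvd_walsh_add_walsh_add_walsh hV φ α
        have := four_dvd φ
        have := four_dvd α
        have := four_dvd (φ + α)
        omega
      rcases eight_dvd with h | h
      · linarith [sixtyFour_mul_sq_le_pow_four h,
          sixtyFour_mul_sq_sub_le_pow_four (four_dvd (φ + α))]
      · linarith [sixtyFour_mul_sq_le_pow_four h, sixtyFour_mul_sq_sub_le_pow_four (four_dvd φ)]
    have sum_translate (k : ℕ) : ∑ φ, walsh f (φ + α) ^ k = ∑ φ, walsh f φ ^ k :=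
      Equiv.sum_comp (Equiv.addRight α) fun φ => walsh f φ ^ k
    have := sum_le_sum fun φ (_ : φ ∈ univ) => pair_le φ
    simp only [sum_sub_distrib, ← mul_sum, sum_add_distrib, sum_translate, sum_walsh_sq,
      sum_const, card_univ, card_dual_zmod_two, nsmul_eq_mul] at this
    linarith

end Walsh

/-- `S` is almost perfect nonlinear, i.e. differentially 2-uniform. The solutions of
`S (x + a) + S x = c` come in pairs `x`, `x + a`, so having fewer than four of them is the same as
having at most two. -/
def IsAPN {V W : Type*} [AddCommGroup V] [AddCommGroup W] (S : V → W) : Prop :=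
  ∀ a ≠ 0, ∀ c, Nat.card {x // S (x + a) + S x = c} < 4

lemma IsAPN.eq_or_eq_or_eq [Finite V] {S : V → W} (hS : IsAPN S) {x y z w : V}
    (hsum : x + y + z + w = 0) (hSsum : S x + S y + S z + S w = 0) : x = y ∨ x = z ∨ y = z := by
  classical
  have := Fintype.ofFinite V
  by_contra! hne
  obtain ⟨hxy, hxz, hyz⟩ := hne
  obtain rfl : x + y + z = w := add_eq_zero_iff_eq_of_zmod_two.1 hsum
  have hSeq : S x + S y = S z + S (x + y + z) := by
    rwa [add_assoc, add_eq_zero_iff_eq_of_zmod_two] at hSsum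
  have card_eq_four : #{x, y, z, x + y + z} = 4 := by
    have hx : x ≠ x + y + z := by
      rwa [add_assoc, ne_eq, left_eq_add, add_eq_zero_iff_eq_of_zmod_two]
    have hy : y ≠ x + y + z := by
      rwa [add_right_comm, ne_eq, right_eq_add, add_eq_zero_iff_eq_of_zmod_two]
    have hz : z ≠ x + y + z := by
      rwa [ne_eq, right_eq_add, add_eq_zero_iff_eq_of_zmod_two]
    simp [hxy, hxz, hyz, hx, hy, hz]
  have subset_fiber :
      {x, y, z, x + y + z} ⊆ ({u | S (u + (x + y)) + S u = S x + S y} : Finset V) := by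
    have hx : x + (x + y) = y := by rw [← add_assoc, ZModModule.add_self, zero_add]
    have hy : y + (x + y) = x := by rw [add_left_comm, ZModModule.add_self, add_zero]
    have hz : z + (x + y) = x + y + z := add_comm _ _
    have hw : x + y + z + (x + y) = z := by
      rw [add_right_comm, ZModModule.add_self, zero_add]
    simp only [insert_subset_iff, singleton_subset_iff, mem_filter_univ, hx, hy, hz, hw]
    exact ⟨add_comm _ _, trivial, (add_comm _ _).trans hSeq.symm, hSeq.symm⟩
  have := hS (x + y) (add_eq_zero_iff_eq_of_zmod_two.not.2 hxy) (S x + S y)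
  rw [Nat.card_eq_fintype_card, Fintype.card_subtype] at this
  linarith [card_le_card subset_fiber]

lemma IsAPN.card_zero_sum_le [Fintype V] [DecidableEq V] [DecidableEq W] {S : V → W}
    (hS : IsAPN S) :
    #{p : Fin 4 → V | ∑ i, p i = 0 ∧ ∑ i, S (p i) = 0} ≤ 3 * Fintype.card V ^ 2 := by
  have subset_trivial : ({p : Fin 4 → V | ∑ i, p i = 0 ∧ ∑ i, S (p i) = 0} : Finset _) ⊆
      univ.image (fun q : V × V => ![q.1, q.1, q.2, q.2]) ∪
        univ.image (fun q : V × V => ![q.1, q.2, q.1, q.2]) ∪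
        univ.image (fun q : V × V => ![q.2, q.1, q.1, q.2]) := by
    intro p hp
    obtain ⟨hp, hSp⟩ := (mem_filter.1 hp).2
    rw [Fin.sum_univ_four] at hp hSp
    have last_eq : p 3 = p 0 + p 1 + p 2 := (add_eq_zero_iff_eq_of_zmod_two.1 hp).symm
    simp only [mem_union, mem_image, mem_univ, true_and, Prod.exists]
    rcases hS.eq_or_eq_or_eq hp hSp with h | h | h
    · have h' : p 3 = p 2 := by rw [last_eq, h, ZModModule.add_self, zero_add]
      refine .inl (.inl ⟨p 0, p 2, ?_⟩)
      ext i; fin_cases i <;> simp [h, h']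
    · have h' : p 3 = p 1 := by rw [last_eq, h, add_right_comm, ZModModule.add_self, zero_add]
      refine .inl (.inr ⟨p 0, p 1, ?_⟩)
      ext i; fin_cases i <;> simp [h, h']
    · have h' : p 3 = p 0 := by rw [last_eq, h, add_assoc, ZModModule.add_self, add_zero]
      refine .inr ⟨p 1, p 0, ?_⟩
      ext i; fin_cases i <;> simp [h, h']
  have card_image_le_sq (F : V × V → Fin 4 → V) : #(univ.image F) ≤ Fintype.card V ^ 2 :=
    card_image_le.trans_eq (by rw [card_univ, Fintype.card_prod, sq])
  calc _ ≤ _ := card_le_card subset_trivial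
    _ ≤ Fintype.card V ^ 2 + Fintype.card V ^ 2 + Fintype.card V ^ 2 :=
      (card_union_le _ _).trans <| add_le_add ((card_union_le _ _).trans <|
        add_le_add (card_image_le_sq _) (card_image_le_sq _)) (card_image_le_sq _)
    _ = 3 * Fintype.card V ^ 2 := by ring

lemma IsAPN.card_pow_four_add_le_of_bijective [Fintype V] {S : V → W} (hS : IsAPN S)
    (hbij : S.Bijective) (hV : 8 ∣ Fintype.card V) :
    (Fintype.card V : ℤ) ^ 4 +
        (Fintype.card V - 1) * (64 * Fintype.card V ^ 2 - 384 * Fintype.card V) ≤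
      3 * Fintype.card V ^ 4 := by
  classical
  let _ : Fintype W := .ofBijective S hbij
  have card_eq : Fintype.card W = Fintype.card V := (Fintype.card_of_bijective hbij).symm
  have fourth_moment_zero :
      (Fintype.card V : ℤ) ^ 4 ≤ ∑ φ, walsh ((0 : Dual (ZMod 2) W) ∘ S) φ ^ 4 := by
    refine le_of_eq_of_le ?_ (single_le_sum (fun φ _ => by positivity) (mem_univ 0))
    simp [walsh]
  have fourth_moment_ne_zero := sum_le_sum fun ψ (hψ : ψ ∈ univ.erase (0 : Dual (ZMod 2) W)) =>
    (isBalanced_dual_comp hbij (ne_of_mem_erase hψ)).le_sum_walsh_pow_four hV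
  have fourth_moment_total := sum_sum_walsh_pow S 4
  rw [← add_sum_erase _ _ (mem_univ (0 : Dual (ZMod 2) W)), card_eq] at fourth_moment_total
  rw [sum_const, card_erase_of_mem (mem_univ _), card_univ, card_dual_zmod_two, card_eq,
    nsmul_eq_mul, Nat.cast_pred Fintype.card_pos] at fourth_moment_ne_zero
  have := mul_le_mul_of_nonneg_left (Nat.cast_le (α := ℤ).2 hS.card_zero_sum_le)
    (by positivity : (0 : ℤ) ≤ Fintype.card V * Fintype.card V)
  push_cast at this
  linarith

lemma not_isAPN_of_bijective [Fintype V] {S : V → W} (hS : S.Bijective)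
    (hV : Fintype.card V = 16) : ¬ IsAPN S := by
  intro hAPN
  have := hAPN.card_pow_four_add_le_of_bijective hS (by norm_num [hV])
  norm_num [hV] at this

/-- The identification of bit vectors under XOR with coordinate vectors over `𝔽₂`. -/
def bitVecEquiv (n : ℕ) : BitVec n ≃ (Fin n → ZMod 2) where
  toFun x i := if x[i] then 1 else 0
  invFun v := BitVec.ofFnLE fun i => v i = 1
  left_inv x := by ext i hi; simp
  right_inv v := by
    ext i
    have : ∀ b : ZMod 2, (if b = 1 then (1 : ZMod 2) else 0) = b := by decide
    simp [this]

lemma bitVecEquiv_xor {n : ℕ} (x y : BitVec n) :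
    bitVecEquiv n (x ^^^ y) = bitVecEquiv n x + bitVecEquiv n y := by
  have ite_xor : ∀ a b : Bool,
      (if a ^^ b then (1 : ZMod 2) else 0) = (if a then 1 else 0) + if b then 1 else 0 := by
    decide
  ext i
  simp only [bitVecEquiv, Equiv.coe_fn_mk, Pi.add_apply, Fin.getElem_fin, BitVec.getElem_xor,
    ite_xor]

/-- No permutation of (F_2)^4 is differentially 2-uniform w.r.t. XOR (no APN
permutation on 4 bits): every bijection S has a nonzero a and some c with
|{x : S(x+a)+S(x) = c}| ≥ 4. -/
theorem no_apn_permutation_4bits (S : BitVec 4 → BitVec 4)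
    (hS : Function.Bijective S) :
    ∃ a : BitVec 4, a ≠ 0 ∧ ∃ c : BitVec 4,
      4 ≤ Nat.card {x : BitVec 4 // S (x ^^^ a) ^^^ S x = c} := by
  by_contra! fiber_lt
  let e := bitVecEquiv 4
  have e_xor : ∀ x y, e (x ^^^ y) = e x + e y := bitVecEquiv_xor
  have conj_bijective : (e ∘ S ∘ e.symm).Bijective :=
    e.bijective.comp (hS.comp e.symm.bijective)
  refine not_isAPN_of_bijective conj_bijective (by simp) fun a ha c => ?_
  obtain ⟨a, rfl⟩ := e.surjective a
  obtain ⟨c, rfl⟩ := e.surjective c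
  have fiber_equiv : {x // S (x ^^^ a) ^^^ S x = c} ≃
      {v // (e ∘ S ∘ e.symm) (v + e a) + (e ∘ S ∘ e.symm) v = e c} :=
    e.subtypeEquiv fun x => by simp [← e_xor]
  rw [← Nat.card_congr fiber_equiv]
  refine fiber_lt a ?_ c
  rintro rfl
  exact ha (by simpa using e_xor 0 0)
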